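/- Existence of non-constant q-periodic boundary law solutions for all large periods (Theorem 3.1, part 2): Fix an integer d ≥ 2. Let Q : ℤ → (0,∞) be even with Q(0) = 1 and Σ_{j∈ℤ} Q(j) < ∞, set Q̃(i) := sup_{|j| ≥ |i|} Q(j), and assume Σ_{i=1}^∞ (Σ_{j=1}^∞ Q̃(ij))^{(d+1)/2} < ∞. If (‖Q‖_{(d+1)/2,ℤ}, ‖Q‖_{d+1,ℤ∖{0}}) lies in the interior G_d° of the good set (as a subset of ℝ²), then there exists q₀ = q₀(Q,d) such that for every integer q ≥ q₀ there exists a non-constant λ : ℤ/qℤ → (0,∞) with λ(0̄) = 1 satisfying λ(ī) = (Σ_{j̄∈ℤ/qℤ} Q_q(ī − j̄) λ(j̄) / Σ_{j̄∈ℤ/qℤ} Q_q(j̄) λ(j̄))^d for every ī ∈ ℤ/qℤ. -/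

import Mathlib

/-!
Write `lam = x ^ d` with `x 0 = 1`, and let `y` be `x` off the origin, extended by `0`. With
`A = Qfuzzy q Q`, the boundary law equation becomes the fixed point equation `y = N(y) / D(y)`
off `0`, where `N(y)_i = A i + ∑ j, A (i - j) * y j ^ d` and `D(y) = A 0 + ∑ j, A j * y j ^ d ≥ 1`
(`blMap`; evenness of `A` makes the normalisation at `0` consistent).

Let `γ` and `δ` bound the `(d+1)/2`-norm of `A` and the `(d+1)`-norm of `A` off `0`. Young's
inequality (`young_conv`) shows that the first good-set inequality makes the nonnegative part of
the `ε`-ball of `ℓ^(d+1)` invariant (`blMap_mem`). Together with the Lipschitz bound for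
`y ↦ y ^ d` (`lpN_pow_sub_pow_le`), it shows that `blMap` has Lipschitz constant at most
`2dγ ε^(d-1) + 2dδ ε^d` there (`blMap_lipschitz`), which the second inequality makes less than `1`.
So a fixed point exists. The second inequality also forces `ε < 1`, so every value of the fixed
point is less than `1` and `lam` is not constant (`exists_boundaryLaw`).

It remains to control the norms of `Qfuzzy q Q` for large `q`. On minimal representatives
`Qfuzzy q Q` is `Q` plus a nonnegative remainder whose total mass is the mass of `Q` outside
`(-q/2, q/2]`, which tends to `0` (`exists_sum_tail_le`). As the `1`-norm dominates every
`p`-norm with `p ≥ 1`, the two norms eventually exceed those of `Q` by arbitrarily little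
(`lpN_le_normZ_add`), and interiority of the point in the good set absorbs the excess.
-/


open scoped BigOperators
open Filter Topology

noncomputable section

/-- The good set `G_d ⊆ (1,∞) × (0,∞)`. -/
def goodSet (d : ℕ) : Set (ℝ × ℝ) :=
  {gd | 1 < gd.1 ∧ 0 < gd.2 ∧ ∃ ε > 0,
    gd.2 + gd.1 * ε ^ d ≤ ε ∧
    2 * d * gd.1 * ε ^ (d - 1) + 2 * d * gd.2 * ε ^ d < 1}

/-- The fuzzy transfer operator `Q_q(ī) = Σ_{j ≡ i mod q} Q(j)`. -/
noncomputable def Qfuzzy (q : ℕ) (Q : ℤ → ℝ) (i : ZMod q) : ℝ :=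
  ∑' j : {j : ℤ // (j : ZMod q) = i}, Q j.1

/-- The `p`-norm `‖x‖_{p,ℤ}`. -/
noncomputable def normZ (p : ℝ) (x : ℤ → ℝ) : ℝ :=
  (∑' j : ℤ, |x j| ^ p) ^ (1 / p)

/-- The `p`-norm `‖x‖_{p,ℤ∖{0}}`. -/
noncomputable def normZ0 (p : ℝ) (x : ℤ → ℝ) : ℝ :=
  (∑' j : {j : ℤ // j ≠ 0}, |x j.1| ^ p) ^ (1 / p)

/-- The `p`-norm `‖x‖_{p,ℤ/qℤ}`. -/
noncomputable def normM (q : ℕ) (p : ℝ) (x : ZMod q → ℝ) : ℝ :=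
  (∑' i : ZMod q, |x i| ^ p) ^ (1 / p)

/-- The `p`-norm `‖x‖_{p,ℤ/qℤ∖{0̄}}`. -/
noncomputable def normM0 (q : ℕ) (p : ℝ) (x : ZMod q → ℝ) : ℝ :=
  (∑' i : {i : ZMod q // i ≠ 0}, |x i.1| ^ p) ^ (1 / p)

/-- `Q̃(i) := sup_{|j| ≥ |i|} Q(j)`. -/
noncomputable def Qtilde (Q : ℤ → ℝ) (i : ℤ) : ℝ :=
  ⨆ j : {j : ℤ // |i| ≤ |j|}, Q j.1


/-! ### Finite norms and Young's inequality -/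

/-- The finite `p`-norm `(∑ |f i|^p)^(1/p)`, for a real exponent. -/
def lpN {ι : Type*} [Fintype ι] (p : ℝ) (f : ι → ℝ) : ℝ :=
  (∑ i, |f i| ^ p) ^ (1 / p)

section Norm
variable {ι : Type*} [Fintype ι]

lemma sum_abs_rpow_nonneg (p : ℝ) (f : ι → ℝ) : 0 ≤ ∑ i, |f i| ^ p :=
  Finset.sum_nonneg fun _ _ => Real.rpow_nonneg (abs_nonneg _) _

lemma lpN_nonneg (p : ℝ) (f : ι → ℝ) : 0 ≤ lpN p f :=
  Real.rpow_nonneg (sum_abs_rpow_nonneg p f) _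

lemma lpN_mono {p : ℝ} (hp : 0 < p) {f g : ι → ℝ} (h : ∀ i, |f i| ≤ |g i|) :
    lpN p f ≤ lpN p g := by
  unfold lpN
  refine Real.rpow_le_rpow (sum_abs_rpow_nonneg p f) ?_ (by positivity)
  exact Finset.sum_le_sum fun i _ => Real.rpow_le_rpow (abs_nonneg _) (h i) hp.le

lemma lpN_add_le {p : ℝ} (hp : 1 ≤ p) (f g : ι → ℝ) :
    lpN p (fun i => f i + g i) ≤ lpN p f + lpN p g :=
  Real.Lp_add_le _ f g hp

lemma lpN_rpow {p : ℝ} (hp : 0 < p) (f : ι → ℝ) : lpN p f ^ p = ∑ i, |f i| ^ p := by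
  unfold lpN
  rw [← Real.rpow_mul (sum_abs_rpow_nonneg p f), one_div_mul_cancel hp.ne', Real.rpow_one]

lemma lpN_const_mul {p : ℝ} (hp : 0 < p) (c : ℝ) (hc : 0 ≤ c) (f : ι → ℝ) :
    lpN p (fun i => c * f i) = c * lpN p f := by
  unfold lpN
  have : ∀ i, |c * f i| ^ p = c ^ p * |f i| ^ p := fun i => by
    rw [abs_mul, abs_of_nonneg hc, Real.mul_rpow hc (abs_nonneg _)]
  simp_rw [this, ← Finset.mul_sum]
  rw [Real.mul_rpow (by positivity) (sum_abs_rpow_nonneg p f), ← Real.rpow_mul hc,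
    mul_one_div_cancel hp.ne', Real.rpow_one]

lemma abs_le_lpN {p : ℝ} (hp : 0 < p) (f : ι → ℝ) (i : ι) : |f i| ≤ lpN p f := by
  have h : |f i| ^ p ≤ lpN p f ^ p := by
    rw [lpN_rpow hp]
    exact Finset.single_le_sum (f := fun i => |f i| ^ p)
      (fun _ _ => Real.rpow_nonneg (abs_nonneg _) _) (Finset.mem_univ i)
  exact (Real.rpow_le_rpow_iff (abs_nonneg _) (lpN_nonneg _ _) hp).1 h

lemma continuous_lpN {p : ℝ} (hp : 0 < p) : Continuous (lpN p : (ι → ℝ) → ℝ) := by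
  unfold lpN
  refine Continuous.rpow_const ?_ fun _ => Or.inr (by positivity)
  exact continuous_finsetSum _ fun i _ =>
    (continuous_apply i).abs.rpow_const fun _ => Or.inr hp.le

/-- The `p`-norm is dominated by the `1`-norm. -/
lemma lpN_le_sum {p : ℝ} (hp : 1 ≤ p) (f : ι → ℝ) : lpN p f ≤ ∑ i, |f i| := by
  have hp0 : 0 < p := by linarith
  set S := ∑ i, |f i| with hS
  have hS0 : 0 ≤ S := Finset.sum_nonneg fun _ _ => abs_nonneg _
  rcases hS0.eq_or_lt with h0 | hpos
  · have : ∀ i, |f i| = 0 := fun i =>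
      (Finset.sum_eq_zero_iff_of_nonneg fun _ _ => abs_nonneg _).1 h0.symm i (Finset.mem_univ i)
    rw [← h0]
    unfold lpN
    simp [this, Real.zero_rpow hp0.ne', Real.zero_rpow (inv_pos.2 hp0).ne']
  · have key : ∑ i, |f i| ^ p ≤ S ^ p := by
      calc ∑ i, |f i| ^ p ≤ ∑ i, |f i| * S ^ (p - 1) := by
            refine Finset.sum_le_sum fun i _ => ?_
            have hi : |f i| ≤ S := Finset.single_le_sum (f := fun i => |f i|)
              (fun _ _ => abs_nonneg _) (Finset.mem_univ i)
            rcases (abs_nonneg (f i)).eq_or_lt with h | h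
            · rw [← h, Real.zero_rpow hp0.ne']; simp
            · calc |f i| ^ p = |f i| * |f i| ^ (p - 1) := by
                    rw [← Real.rpow_one_add' h.le (by linarith)]; congr 1; ring
                _ ≤ _ := by gcongr
        _ = S ^ p := by
            rw [← Finset.sum_mul, ← hS, ← Real.rpow_one_add' hpos.le (by linarith)]
            congr 1; ring
    calc lpN p f ≤ (S ^ p) ^ (1 / p) :=
          Real.rpow_le_rpow (sum_abs_rpow_nonneg p f) key (by positivity)
      _ = S := by rw [← Real.rpow_mul hS0, mul_one_div_cancel hp0.ne', Real.rpow_one]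

/-- Hölder's inequality in interpolation form. -/
lemma sum_rpow_mul_rpow_le {θ : ℝ} (h0 : 0 < θ) (h1 : θ < 1) {u v : ι → ℝ}
    (hu : ∀ i, 0 ≤ u i) (hv : ∀ i, 0 ≤ v i) :
    ∑ i, u i ^ θ * v i ^ (1 - θ) ≤ (∑ i, u i) ^ θ * (∑ i, v i) ^ (1 - θ) := by
  have hc : Real.HolderConjugate (1 / θ) (1 / (1 - θ)) := by
    have h2 : 0 < 1 - θ := by linarith
    rw [Real.holderConjugate_iff]
    refine ⟨by rw [lt_div_iff₀ h0]; linarith, by simp⟩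
  have := Real.inner_le_Lp_mul_Lq_of_nonneg Finset.univ hc
    (f := fun i => u i ^ θ) (g := fun i => v i ^ (1 - θ))
    (fun i _ => Real.rpow_nonneg (hu i) _) (fun i _ => Real.rpow_nonneg (hv i) _)
  have h2 : (1 - θ) ≠ 0 := by linarith
  simpa only [one_div_one_div, ← Real.rpow_mul (hu _), ← Real.rpow_mul (hv _),
    mul_one_div_cancel h0.ne', mul_one_div_cancel h2, Real.rpow_one] using this

end Norm

/-- Young's convolution inequality on a finite group for the exponents
`(d+1)/2`, `(d+1)/d` and `d+1`. -/
lemma young_conv {G : Type*} [Fintype G] [AddCommGroup G] {d : ℕ} (hd : 2 ≤ d)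
    {A f : G → ℝ} (hA : ∀ i, 0 ≤ A i) (hf : ∀ i, 0 ≤ f i) :
    lpN ((d : ℝ) + 1) (fun i => ∑ j, A (i - j) * f j) ≤
      lpN (((d : ℝ) + 1) / 2) A * lpN (((d : ℝ) + 1) / d) f := by
  have hd' : (2 : ℝ) ≤ d := by exact_mod_cast hd
  set p : ℝ := ((d : ℝ) + 1) / 2 with hp
  set s : ℝ := ((d : ℝ) + 1) / d with hs
  set r : ℝ := (d : ℝ) + 1 with hr
  have hr0 : 0 < r := by positivity
  set a : G → ℝ := fun i => A i ^ p with ha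
  set b : G → ℝ := fun i => f i ^ s with hb
  have ha0 : ∀ i, 0 ≤ a i := fun i => Real.rpow_nonneg (hA i) _
  have hb0 : ∀ i, 0 ≤ b i := fun i => Real.rpow_nonneg (hf i) _
  set SA := ∑ i, a i with hSA
  set SB := ∑ i, b i with hSB
  have hSA0 : 0 ≤ SA := Finset.sum_nonneg fun i _ => ha0 i
  have hSB0 : 0 ≤ SB := Finset.sum_nonneg fun i _ => hb0 i
  have hshift : ∀ i, ∑ j, a (i - j) = SA := fun i =>
    Fintype.sum_equiv (Equiv.subLeft i) _ _ fun j => rfl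
  have hshift' : ∀ j, ∑ i, a (i - j) = SA := fun j =>
    Fintype.sum_equiv (Equiv.subRight j) _ _ fun i => rfl
  have hθ : (1 - 1 / r) = d / r := by field_simp; rw [hr]; ring
  -- With `a = A ^ p` and `b = f ^ s`, the summand `A f = a ^ (2/r) * b ^ (d/r)` factors as
  -- `(a b) ^ (1/r) * (a ^ (1/d) * b ^ (1 - 1/d)) ^ (d/r)`, so two applications of Hölder suffice.
  have hpt : ∀ i, ∑ j, A (i - j) * f j ≤
      (∑ j, a (i - j) * b j) ^ (1 / r) * (SA ^ (1 / (d : ℝ)) * SB ^ (1 - 1 / (d : ℝ))) ^ (d / r) := by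
    intro i
    have e : ∀ j, A (i - j) * f j = (a (i - j) * b j) ^ (1 / r) *
        (a (i - j) ^ (1 / (d : ℝ)) * b j ^ (1 - 1 / (d : ℝ))) ^ (1 - 1 / r) := by
      intro j
      have h1 := ha0 (i - j)
      have h2 := hb0 j
      rw [Real.mul_rpow h1 h2, Real.mul_rpow (Real.rpow_nonneg h1 _) (Real.rpow_nonneg h2 _),
        ← Real.rpow_mul h1, ← Real.rpow_mul h2, mul_mul_mul_comm, hθ,
        ← Real.rpow_add' h1, ← Real.rpow_add' h2]
      · simp only [ha, hb]
        rw [← Real.rpow_mul (hA _), ← Real.rpow_mul (hf _)]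
        have e1 : p * (1 / r + 1 / (d : ℝ) * (d / r)) = 1 := by rw [hp]; field_simp; norm_num
        have e2 : s * (1 / r + (1 - 1 / (d : ℝ)) * (d / r)) = 1 := by
          rw [hs]; field_simp; ring
        rw [e1, e2, Real.rpow_one, Real.rpow_one]
      · have : 1 / r + (1 - 1 / (d : ℝ)) * (d / r) = d / r := by field_simp; ring
        rw [this]; positivity
      · positivity
    rw [Finset.sum_congr rfl fun j _ => e j]
    refine (sum_rpow_mul_rpow_le (θ := 1 / r) (by positivity)
      (by rw [div_lt_one hr0]; rw [hr]; linarith)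
      (fun j => mul_nonneg (ha0 _) (hb0 _))
      (fun j => mul_nonneg (Real.rpow_nonneg (ha0 _) _) (Real.rpow_nonneg (hb0 _) _))).trans ?_
    rw [hθ]
    refine mul_le_mul_of_nonneg_left ?_
      (Real.rpow_nonneg (Finset.sum_nonneg fun j _ => mul_nonneg (ha0 _) (hb0 _)) _)
    refine Real.rpow_le_rpow (Finset.sum_nonneg fun j _ =>
      mul_nonneg (Real.rpow_nonneg (ha0 _) _) (Real.rpow_nonneg (hb0 _) _)) ?_ (by positivity)
    have := sum_rpow_mul_rpow_le (θ := 1 / (d : ℝ)) (by positivity)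
      (by rw [div_lt_one (by positivity)]; linarith) (u := fun j => a (i - j)) (v := b)
      (fun j => ha0 _) hb0
    rwa [hshift i] at this
  have hc0 : ∀ i, 0 ≤ ∑ j, A (i - j) * f j := fun i =>
    Finset.sum_nonneg fun j _ => mul_nonneg (hA _) (hf _)
  have hsum : ∑ i, |∑ j, A (i - j) * f j| ^ r ≤ SA ^ (2 : ℝ) * SB ^ (d : ℝ) := by
    calc ∑ i, |∑ j, A (i - j) * f j| ^ r
        ≤ ∑ i, (∑ j, a (i - j) * b j) * (SA * SB ^ ((d : ℝ) - 1)) := by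
          refine Finset.sum_le_sum fun i _ => ?_
          rw [abs_of_nonneg (hc0 i)]
          refine (Real.rpow_le_rpow (hc0 i) (hpt i) hr0.le).trans (le_of_eq ?_)
          have h3 : 0 ≤ ∑ j, a (i - j) * b j :=
            Finset.sum_nonneg fun j _ => mul_nonneg (ha0 _) (hb0 _)
          rw [Real.mul_rpow (by positivity) (by positivity), ← Real.rpow_mul h3,
            one_div_mul_cancel hr0.ne', Real.rpow_one, ← Real.rpow_mul (by positivity),
            div_mul_cancel₀ _ hr0.ne', Real.mul_rpow (by positivity) (by positivity),
            ← Real.rpow_mul hSA0, ← Real.rpow_mul hSB0, one_div_mul_cancel (by positivity),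
            Real.rpow_one]
          congr 3
          field_simp
      _ = SA ^ (2 : ℝ) * SB ^ (d : ℝ) := by
          rw [← Finset.sum_mul, Finset.sum_comm]
          simp_rw [← Finset.sum_mul, hshift', ← Finset.mul_sum]
          rw [← hSB]
          have : SB ^ (d : ℝ) = SB * SB ^ ((d : ℝ) - 1) := by
            rw [← Real.rpow_one_add' hSB0 (by linarith)]; congr 1; ring
          rw [this, Real.rpow_two]; ring
  have hfin : (SA ^ (2 : ℝ) * SB ^ (d : ℝ)) ^ (1 / r) = lpN p A * lpN s f := by
    unfold lpN
    simp_rw [abs_of_nonneg (hA _), abs_of_nonneg (hf _)]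
    rw [Real.mul_rpow (by positivity) (by positivity), ← Real.rpow_mul hSA0,
      ← Real.rpow_mul hSB0]
    congr 2
    · rw [hp]; field_simp
    · rw [hs]; field_simp
  rw [← hfin]
  exact Real.rpow_le_rpow (sum_abs_rpow_nonneg _ _) hsum (by positivity)

section Powers
variable {ι : Type*} [Fintype ι]

lemma lpN_pow {d : ℕ} (hd : 2 ≤ d) (y : ι → ℝ) :
    lpN (((d : ℝ) + 1) / d) (fun i => y i ^ d) = lpN ((d : ℝ) + 1) y ^ d := by
  have hd' : (2 : ℝ) ≤ d := by exact_mod_cast hd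
  unfold lpN
  have e : ∀ i, |y i ^ d| ^ (((d : ℝ) + 1) / d) = |y i| ^ ((d : ℝ) + 1) := fun i => by
    rw [abs_pow, ← Real.rpow_natCast, ← Real.rpow_mul (abs_nonneg _)]
    congr 1; field_simp
  simp_rw [e]
  rw [← Real.rpow_natCast, ← Real.rpow_mul (sum_abs_rpow_nonneg _ _)]
  congr 1; field_simp

/-- The power map `y ↦ y ^ d` is Lipschitz from the nonnegative part of the `ε`-ball of
`ℓ^(d+1)` to `ℓ^((d+1)/d)`. The factor `2` comes from
`max y z ^ (d+1) ≤ y ^ (d+1) + z ^ (d+1)`. -/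
lemma lpN_pow_sub_pow_le {d : ℕ} (hd : 2 ≤ d) {ε : ℝ} (hε : 0 < ε) {y z : ι → ℝ}
    (hy : ∀ i, 0 ≤ y i) (hz : ∀ i, 0 ≤ z i)
    (hyε : lpN ((d : ℝ) + 1) y ≤ ε) (hzε : lpN ((d : ℝ) + 1) z ≤ ε) :
    lpN (((d : ℝ) + 1) / d) (fun i => |y i ^ d - z i ^ d|) ≤
      2 * d * ε ^ (d - 1) * lpN ((d : ℝ) + 1) (fun i => y i - z i) := by
  have hd' : (2 : ℝ) ≤ d := by exact_mod_cast hd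
  have hd1 : ((d - 1 : ℕ) : ℝ) = d - 1 := by rw [Nat.cast_sub (by omega)]; simp
  set s : ℝ := ((d : ℝ) + 1) / d with hs
  set r : ℝ := (d : ℝ) + 1 with hr
  have hr0 : 0 < r := by positivity
  have hs0 : 0 < s := by positivity
  set M : ι → ℝ := fun i => max (y i) (z i) with hM
  have hM0 : ∀ i, 0 ≤ M i := fun i => (hy i).trans (le_max_left _ _)
  set w : ι → ℝ := fun i => y i - z i with hw
  have h1 : lpN s (fun i => |y i ^ d - z i ^ d|) ≤ lpN s (fun i => d * (M i ^ (d - 1) * |w i|)) := by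
    refine lpN_mono hs0 fun i => ?_
    have := abs_pow_sub_pow_le (y i) (z i) d
    have hMi := hM0 i
    have hnn : 0 ≤ (d : ℝ) * (M i ^ (d - 1) * |w i|) := by positivity
    rw [abs_abs, abs_of_nonneg hnn]
    rw [abs_of_nonneg (hy i), abs_of_nonneg (hz i)] at this
    calc _ ≤ _ := this
      _ = _ := by simp only [hM, hw]; ring
  rw [lpN_const_mul hs0 _ (by positivity)] at h1
  have hSM : ∑ i, M i ^ r ≤ 2 * ε ^ r := by
    have hy' : ∑ i, |y i| ^ r ≤ ε ^ r := by
      rw [← lpN_rpow hr0]; exact Real.rpow_le_rpow (lpN_nonneg _ _) hyε hr0.le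
    have hz' : ∑ i, |z i| ^ r ≤ ε ^ r := by
      rw [← lpN_rpow hr0]; exact Real.rpow_le_rpow (lpN_nonneg _ _) hzε hr0.le
    calc ∑ i, M i ^ r ≤ ∑ i, (|y i| ^ r + |z i| ^ r) := by
          refine Finset.sum_le_sum fun i _ => ?_
          have a1 := Real.rpow_nonneg (abs_nonneg (y i)) r
          have a2 := Real.rpow_nonneg (abs_nonneg (z i)) r
          rcases max_choice (y i) (z i) with h | h
          · simp only [hM, h]; rw [abs_of_nonneg (hy i)] at *; linarith
          · simp only [hM, h]; rw [abs_of_nonneg (hz i)] at *; linarith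
      _ ≤ _ := by rw [Finset.sum_add_distrib]; linarith
  have hSM0 : 0 ≤ ∑ i, M i ^ r := Finset.sum_nonneg fun i _ => Real.rpow_nonneg (hM0 i) _
  have h2 : lpN s (fun i => M i ^ (d - 1) * |w i|) ≤ 2 * ε ^ (d - 1) * lpN r w := by
    have e : ∀ i, |M i ^ (d - 1) * (|w i|)| ^ s =
        (|w i| ^ r) ^ (1 / (d : ℝ)) * (M i ^ r) ^ (1 - 1 / (d : ℝ)) := fun i => by
      have := hM0 i
      rw [abs_of_nonneg (by positivity), Real.mul_rpow (by positivity) (abs_nonneg _),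
        ← Real.rpow_natCast, ← Real.rpow_mul this, ← Real.rpow_mul this,
        ← Real.rpow_mul (abs_nonneg _), mul_comm, hd1]
      congr 2
      · rw [hs]; field_simp
      · rw [hs]; field_simp
    have hS := sum_rpow_mul_rpow_le (θ := 1 / (d : ℝ)) (by positivity)
      (by rw [div_lt_one (by positivity)]; linarith) (u := fun i => |w i| ^ r)
      (v := fun i => M i ^ r) (fun i => by positivity) (fun i => Real.rpow_nonneg (hM0 i) _)
    simp_rw [← e] at hS
    have hexp : 0 ≤ 1 - 1 / (d : ℝ) := by
      rw [sub_nonneg, div_le_one (by positivity)]; linarith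
    have hSw0 := sum_abs_rpow_nonneg r w
    have hSw : (∑ i, |w i| ^ r) ^ (1 / (d : ℝ)) = (lpN r w) ^ s := by
      unfold lpN
      rw [← Real.rpow_mul hSw0]; congr 1; rw [hs]; field_simp
    have hM2 : (∑ i, M i ^ r) ^ (1 - 1 / (d : ℝ)) ≤ (2 * ε ^ (d - 1)) ^ s := by
      calc (∑ i, M i ^ r) ^ (1 - 1 / (d : ℝ)) ≤ (2 * ε ^ r) ^ (1 - 1 / (d : ℝ)) :=
            Real.rpow_le_rpow hSM0 hSM hexp
        _ = 2 ^ (1 - 1 / (d : ℝ)) * (ε ^ (d - 1)) ^ s := by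
            rw [Real.mul_rpow (by positivity) (by positivity), ← Real.rpow_natCast,
              ← Real.rpow_mul hε.le, ← Real.rpow_mul hε.le, hd1]
            congr 2; rw [hs]; field_simp
        _ ≤ 2 ^ s * (ε ^ (d - 1)) ^ s := by
            gcongr
            · norm_num
            · rw [hs, hr]
              have : ((d : ℝ) + 1) / d = 1 + 1 / d := by field_simp
              rw [this]
              have : 0 < 1 / (d : ℝ) := by positivity
              linarith
        _ = _ := by rw [Real.mul_rpow (by positivity) (by positivity)]
    have hfin : ∑ i, |M i ^ (d - 1) * (|w i|)| ^ s ≤ (2 * ε ^ (d - 1) * lpN r w) ^ s := by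
      refine hS.trans ?_
      rw [hSw, Real.mul_rpow (by positivity) (lpN_nonneg _ _), mul_comm]
      exact mul_le_mul_of_nonneg_right hM2 (Real.rpow_nonneg (lpN_nonneg _ _) _)
    rw [← lpN_rpow hs0] at hfin
    exact (Real.rpow_le_rpow_iff (lpN_nonneg _ _)
      (mul_nonneg (by positivity) (lpN_nonneg _ _)) hs0).1 hfin
  calc _ ≤ _ := h1
    _ ≤ d * (2 * ε ^ (d - 1) * lpN r w) := by gcongr
    _ = _ := by ring

end Powers

/-! ### The fixed point on a finite group -/

/-- The map `y ↦ N(y) / D(y)` off the origin, with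
`N(y)_i = A i + ∑ j, A (i - j) * y j ^ d` and `D(y) = A 0 + ∑ j, A j * y j ^ d`.
Its argument is the restriction of `x = lam ^ (1/d)` to the nonzero elements, extended by `0`. -/
def blMap {G : Type*} [Fintype G] [AddCommGroup G] [DecidableEq G] (d : ℕ) (A : G → ℝ)
    (y : G → ℝ) (i : G) : ℝ :=
  if i = 0 then 0 else
    (A i + ∑ j, A (i - j) * y j ^ d) / (A 0 + ∑ j, A j * y j ^ d)

/-- The domain of `blMap`: nonnegative functions vanishing at `0`, of `(d+1)`-norm at most `ε`. -/
def blBall (G : Type*) [Fintype G] [AddCommGroup G] (d : ℕ) (ε : ℝ) : Set (G → ℝ) :=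
  {y | (∀ i, 0 ≤ y i) ∧ y 0 = 0 ∧ lpN ((d : ℝ) + 1) y ≤ ε}

section FixedPoint
variable {G : Type*} [Fintype G] [AddCommGroup G]

lemma one_le_blDenom {d : ℕ} {A : G → ℝ} (hA : ∀ i, 0 ≤ A i) (hA0 : 1 ≤ A 0) {y : G → ℝ}
    (hy : ∀ i, 0 ≤ y i) : 1 ≤ A 0 + ∑ j, A j * y j ^ d := by
  have : 0 ≤ ∑ j, A j * y j ^ d :=
    Finset.sum_nonneg fun j _ => mul_nonneg (hA j) (pow_nonneg (hy j) d)
  linarith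

lemma isCompact_blBall (d : ℕ) (ε : ℝ) : IsCompact (blBall G d ε) := by
  have hr : (0 : ℝ) < (d : ℝ) + 1 := by positivity
  have hsub : blBall G d ε ⊆ Set.pi Set.univ fun _ => Set.Icc (0 : ℝ) ε := fun y hy i _ =>
    ⟨hy.1 i, (le_abs_self _).trans ((abs_le_lpN hr y i).trans hy.2.2)⟩
  refine (isCompact_univ_pi fun _ => isCompact_Icc).of_isClosed_subset ?_ hsub
  have h1 : IsClosed {y : G → ℝ | ∀ i, 0 ≤ y i} := by
    rw [Set.ofPred_forall]
    exact isClosed_iInter fun i => isClosed_le continuous_const (continuous_apply i)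
  have h2 : IsClosed {y : G → ℝ | y 0 = 0} := isClosed_eq (continuous_apply 0) continuous_const
  have h3 : IsClosed {y : G → ℝ | lpN ((d : ℝ) + 1) y ≤ ε} :=
    isClosed_le (continuous_lpN hr) continuous_const
  exact h1.inter (h2.inter h3)

variable [DecidableEq G]

lemma blMap_mem {d : ℕ} (hd : 2 ≤ d) {A : G → ℝ} (hA : ∀ i, 0 ≤ A i) (hA0 : 1 ≤ A 0)
    {γ δ ε : ℝ} (hγ : lpN (((d : ℝ) + 1) / 2) A ≤ γ)
    (hδ : lpN ((d : ℝ) + 1) (fun i => if i = 0 then 0 else A i) ≤ δ)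
    (hε1 : δ + γ * ε ^ d ≤ ε) {y : G → ℝ} (hy : y ∈ blBall G d ε) :
    blMap d A y ∈ blBall G d ε := by
  obtain ⟨hy0, hyz, hyε⟩ := hy
  have hD := one_le_blDenom (d := d) hA hA0 hy0
  have hC : ∀ i, 0 ≤ ∑ j, A (i - j) * y j ^ d := fun i =>
    Finset.sum_nonneg fun j _ => mul_nonneg (hA _) (pow_nonneg (hy0 j) d)
  have hnn : ∀ i, 0 ≤ blMap d A y i := fun i => by
    unfold blMap
    split_ifs
    · exact le_rfl
    · exact div_nonneg (add_nonneg (hA i) (hC i)) (by linarith)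
  refine ⟨hnn, by simp [blMap], ?_⟩
  have hr : (1 : ℝ) ≤ (d : ℝ) + 1 := by have : (0 : ℝ) ≤ d := by positivity
                                        linarith
  have hγ0 : 0 ≤ γ := (lpN_nonneg _ _).trans hγ
  calc lpN ((d : ℝ) + 1) (blMap d A y)
      ≤ lpN ((d : ℝ) + 1) (fun i => (if i = 0 then 0 else A i) + ∑ j, A (i - j) * y j ^ d) := by
        refine lpN_mono (by linarith) fun i => ?_
        rw [abs_of_nonneg (hnn i)]
        refine le_trans ?_ (le_abs_self _)
        unfold blMap
        split_ifs
        · have := hC i; linarith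
        · exact div_le_self (add_nonneg (hA i) (hC i)) hD
    _ ≤ lpN ((d : ℝ) + 1) (fun i => if i = 0 then 0 else A i) +
          lpN ((d : ℝ) + 1) (fun i => ∑ j, A (i - j) * y j ^ d) := lpN_add_le hr _ _
    _ ≤ δ + lpN (((d : ℝ) + 1) / 2) A * lpN (((d : ℝ) + 1) / d) (fun j => y j ^ d) :=
        add_le_add hδ (young_conv hd hA fun j => pow_nonneg (hy0 j) d)
    _ ≤ δ + γ * ε ^ d := by
        rw [lpN_pow hd]
        have := lpN_nonneg ((d : ℝ) + 1) y
        gcongr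
    _ ≤ ε := hε1

/-- Since `D ≥ 1`, the difference of two values of `blMap` is controlled pointwise by
`|N(y) - N(z)| + |D(z) - D(y)| * blMap z`; Young bounds the first term and Hölder the second. -/
lemma blMap_lipschitz {d : ℕ} (hd : 2 ≤ d) {A : G → ℝ} (hA : ∀ i, 0 ≤ A i) (hA0 : 1 ≤ A 0)
    {γ δ ε : ℝ} (hγ : lpN (((d : ℝ) + 1) / 2) A ≤ γ)
    (hδ : lpN ((d : ℝ) + 1) (fun i => if i = 0 then 0 else A i) ≤ δ) (hε : 0 < ε)
    (hε1 : δ + γ * ε ^ d ≤ ε) {y z : G → ℝ} (hy : y ∈ blBall G d ε) (hz : z ∈ blBall G d ε) :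
    lpN ((d : ℝ) + 1) (fun i => blMap d A y i - blMap d A z i) ≤
      (2 * d * γ * ε ^ (d - 1) + 2 * d * δ * ε ^ d) *
        lpN ((d : ℝ) + 1) (fun i => y i - z i) := by
  have hTz := blMap_mem hd hA hA0 hγ hδ hε1 hz
  obtain ⟨hy0, hyz, hyε⟩ := hy
  obtain ⟨hz0, hzz, hzε⟩ := hz
  have hd0 : (2 : ℝ) ≤ d := by exact_mod_cast hd
  have hr : (1 : ℝ) ≤ (d : ℝ) + 1 := by linarith
  have hγ0 : 0 ≤ γ := (lpN_nonneg _ _).trans hγ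
  have hδ0 : 0 ≤ δ := (lpN_nonneg _ _).trans hδ
  set f : G → ℝ := fun j => |y j ^ d - z j ^ d| with hf
  have hf0 : ∀ j, 0 ≤ f j := fun j => abs_nonneg _
  set W := lpN ((d : ℝ) + 1) (fun i => y i - z i) with hW
  have hW0 : 0 ≤ W := lpN_nonneg _ _
  set F := lpN (((d : ℝ) + 1) / d) f with hF
  have hFle : F ≤ 2 * d * ε ^ (d - 1) * W := lpN_pow_sub_pow_le hd hε hy0 hz0 hyε hzε
  have hF0 : 0 ≤ F := lpN_nonneg _ _
  set Dy := A 0 + ∑ j, A j * y j ^ d with hDy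
  set Dz := A 0 + ∑ j, A j * z j ^ d with hDz
  have hDy1 : 1 ≤ Dy := one_le_blDenom hA hA0 hy0
  have hDz1 : 1 ≤ Dz := one_le_blDenom hA hA0 hz0
  have hDdiff : |Dz - Dy| ≤ δ * F := by
    have hh : Real.HolderConjugate ((d : ℝ) + 1) (((d : ℝ) + 1) / d) := by
      rw [Real.holderConjugate_iff]
      refine ⟨by linarith, ?_⟩
      field_simp
      ring
    have h1 := Real.inner_le_Lp_mul_Lq Finset.univ (fun i => if i = 0 then 0 else A i) f hh
    calc |Dz - Dy| = |∑ j, A j * (z j ^ d - y j ^ d)| := by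
          rw [hDz, hDy, add_sub_add_left_eq_sub, ← Finset.sum_sub_distrib]
          simp_rw [mul_sub]
      _ ≤ ∑ j, |A j * (z j ^ d - y j ^ d)| := Finset.abs_sum_le_sum_abs _ _
      _ = ∑ j, (if j = 0 then 0 else A j) * f j := by
          refine Finset.sum_congr rfl fun j _ => ?_
          split_ifs with hj
          · rw [hj, hyz, hzz]; simp
          · rw [abs_mul, abs_of_nonneg (hA j), abs_sub_comm]
      _ ≤ lpN ((d : ℝ) + 1) (fun i => if i = 0 then 0 else A i) * F := h1
      _ ≤ δ * F := by gcongr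
  have hpt : ∀ i, |blMap d A y i - blMap d A z i| ≤
      ∑ j, A (i - j) * f j + |Dz - Dy| * blMap d A z i := by
    intro i
    have hc : 0 ≤ ∑ j, A (i - j) * f j :=
      Finset.sum_nonneg fun j _ => mul_nonneg (hA _) (hf0 j)
    have hTi := hTz.1 i
    by_cases hi : i = 0
    · have : blMap d A y i - blMap d A z i = 0 := by simp [blMap, hi]
      rw [this, abs_zero]
      exact add_nonneg hc (mul_nonneg (abs_nonneg _) hTi)
    · set Ny := A i + ∑ j, A (i - j) * y j ^ d with hNy
      set Nz := A i + ∑ j, A (i - j) * z j ^ d with hNz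
      have ey : blMap d A y i = Ny / Dy := by simp [blMap, hi, hNy, hDy]
      have ez : blMap d A z i = Nz / Dz := by simp [blMap, hi, hNz, hDz]
      have hN : |Ny - Nz| ≤ ∑ j, A (i - j) * f j := by
        rw [hNy, hNz, add_sub_add_left_eq_sub, ← Finset.sum_sub_distrib]
        refine (Finset.abs_sum_le_sum_abs _ _).trans (le_of_eq ?_)
        refine Finset.sum_congr rfl fun j _ => ?_
        rw [← mul_sub, abs_mul, abs_of_nonneg (hA _)]
      have hDy0 : Dy ≠ 0 := by linarith
      have hDz0 : Dz ≠ 0 := by linarith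
      have key : blMap d A y i - blMap d A z i =
          ((Ny - Nz) + (Dz - Dy) * blMap d A z i) / Dy := by
        rw [ey, ez]; field_simp; ring
      rw [key, abs_div, abs_of_pos (by linarith : 0 < Dy)]
      refine (div_le_self (abs_nonneg _) hDy1).trans ((abs_add_le _ _).trans ?_)
      rw [abs_mul, abs_of_nonneg hTi]
      linarith
  calc lpN ((d : ℝ) + 1) (fun i => blMap d A y i - blMap d A z i)
      ≤ lpN ((d : ℝ) + 1) (fun i => ∑ j, A (i - j) * f j + |Dz - Dy| * blMap d A z i) :=
        lpN_mono (by linarith) fun i => (hpt i).trans (le_abs_self _)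
    _ ≤ lpN ((d : ℝ) + 1) (fun i => ∑ j, A (i - j) * f j) +
          lpN ((d : ℝ) + 1) (fun i => |Dz - Dy| * blMap d A z i) := lpN_add_le hr _ _
    _ ≤ γ * F + (δ * F) * ε := by
        rw [lpN_const_mul (by linarith) _ (abs_nonneg _)]
        refine add_le_add ((young_conv hd hA hf0).trans ?_) ?_
        · gcongr
        · exact mul_le_mul hDdiff hTz.2.2 (lpN_nonneg _ _) (by positivity)
    _ = (γ + δ * ε) * F := by ring
    _ ≤ (γ + δ * ε) * (2 * d * ε ^ (d - 1) * W) := by gcongr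
    _ = _ := by
        have : ε ^ d = ε ^ (d - 1) * ε := by rw [← pow_succ]; congr 1; omega
        rw [this]; ring

lemma exists_blMap_fixed {d : ℕ} (hd : 2 ≤ d) {A : G → ℝ} (hA : ∀ i, 0 ≤ A i) (hA0 : 1 ≤ A 0)
    {γ δ ε : ℝ} (hγ : lpN (((d : ℝ) + 1) / 2) A ≤ γ)
    (hδ : lpN ((d : ℝ) + 1) (fun i => if i = 0 then 0 else A i) ≤ δ) (hε : 0 < ε)
    (hε1 : δ + γ * ε ^ d ≤ ε)
    (hε2 : 2 * d * γ * ε ^ (d - 1) + 2 * d * δ * ε ^ d < 1) :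
    ∃ y ∈ blBall G d ε, blMap d A y = y := by
  have hr : (0 : ℝ) < (d : ℝ) + 1 := by positivity
  have hne : (blBall G d ε).Nonempty := by
    refine ⟨0, fun _ => le_rfl, rfl, ?_⟩
    have : lpN ((d : ℝ) + 1) (0 : G → ℝ) = 0 := by
      simp [lpN, Real.zero_rpow hr.ne', Real.zero_rpow (inv_pos.2 hr).ne']
    rw [this]; exact hε.le
  have hcont : ContinuousOn (fun y : G → ℝ =>
      lpN ((d : ℝ) + 1) (fun i => blMap d A y i - y i)) (blBall G d ε) := by
    refine (continuous_lpN hr).comp_continuousOn ?_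
    refine continuousOn_pi.2 fun i => ContinuousOn.sub ?_ (continuous_apply i).continuousOn
    unfold blMap
    split_ifs
    · exact continuousOn_const
    · refine ContinuousOn.div (by fun_prop) (by fun_prop) fun y hy => ?_
      have := one_le_blDenom (d := d) hA hA0 hy.1
      linarith
  -- A strict contraction of a compact set fixes any minimiser of the displacement.
  obtain ⟨y, hy, hmin⟩ := (isCompact_blBall d ε).exists_isMinOn hne hcont
  refine ⟨y, hy, ?_⟩
  have hTy := blMap_mem hd hA hA0 hγ hδ hε1 hy
  have h1 := hmin hTy
  have h2 := blMap_lipschitz hd hA hA0 hγ hδ hε hε1 hTy hy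
  simp only [Set.mem_ofPred_eq] at h1
  set W := lpN ((d : ℝ) + 1) (fun i => blMap d A y i - y i) with hW
  have hW0 : 0 ≤ W := lpN_nonneg _ _
  have hWz : W = 0 := by nlinarith
  funext i
  have := abs_le_lpN hr (fun i => blMap d A y i - y i) i
  rw [← hW, hWz] at this
  exact sub_eq_zero.1 (abs_eq_zero.1 (le_antisymm this (abs_nonneg _)))

/-- Existence of a nonconstant normalised solution of the boundary law equation for an even
positive kernel on a nontrivial finite group whose norms satisfy the good-set inequalities. -/
lemma exists_boundaryLaw [Nontrivial G] {d : ℕ} (hd : 2 ≤ d) {A : G → ℝ} (hA : ∀ i, 0 < A i)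
    (hA0 : 1 ≤ A 0) (hAeven : ∀ i, A (-i) = A i)
    {γ δ ε : ℝ} (hγ1 : 1 < γ) (hδ0 : 0 < δ) (hγ : lpN (((d : ℝ) + 1) / 2) A ≤ γ)
    (hδ : lpN ((d : ℝ) + 1) (fun i => if i = 0 then 0 else A i) ≤ δ) (hε : 0 < ε)
    (hε1 : δ + γ * ε ^ d ≤ ε)
    (hε2 : 2 * d * γ * ε ^ (d - 1) + 2 * d * δ * ε ^ d < 1) :
    ∃ lam : G → ℝ, (∀ i, 0 < lam i) ∧ lam 0 = 1 ∧ (∃ i, lam i ≠ 1) ∧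
      ∀ i, lam i = ((∑ j, A (i - j) * lam j) / ∑ j, A j * lam j) ^ d := by
  have hA' : ∀ i, 0 ≤ A i := fun i => (hA i).le
  obtain ⟨y, hy, hfix⟩ := exists_blMap_fixed hd hA' hA0 hγ hδ hε hε1 hε2
  obtain ⟨hy0, hyz, hyε⟩ := hy
  have hd0 : (2 : ℝ) ≤ d := by exact_mod_cast hd
  have hεlt : ε < 1 := by
    by_contra hcon
    have h1 : 1 ≤ ε ^ (d - 1) := one_le_pow₀ (not_lt.1 hcon)
    have h2 : 0 < 2 * d * δ * ε ^ d := by positivity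
    have h3 : 1 ≤ 2 * (d : ℝ) * γ := by nlinarith
    nlinarith
  have hD := one_le_blDenom (d := d) hA' hA0 hy0
  have hyi : ∀ i, i ≠ 0 → y i =
      (A i + ∑ j, A (i - j) * y j ^ d) / (A 0 + ∑ j, A j * y j ^ d) := fun i hi => by
    conv_lhs => rw [← hfix]
    simp [blMap, hi]
  set lam : G → ℝ := fun i => if i = 0 then 1 else y i ^ d with hlam
  have hsplit : ∀ i, ∑ j, A (i - j) * lam j = A i + ∑ j, A (i - j) * y j ^ d := by
    intro i
    have e : ∀ j, A (i - j) * lam j = (if j = 0 then A i else 0) + A (i - j) * y j ^ d := by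
      intro j
      by_cases hj : j = 0
      · subst hj; simp [hlam, hyz, zero_pow (by omega : d ≠ 0)]
      · simp [hlam, hj]
    simp_rw [e]
    rw [Finset.sum_add_distrib]
    simp
  have hden : ∑ j, A j * lam j = A 0 + ∑ j, A j * y j ^ d := by
    have := hsplit 0
    simpa only [zero_sub, hAeven] using this
  have hypos : ∀ i, i ≠ 0 → 0 < y i := fun i hi => by
    rw [hyi i hi]
    refine div_pos (add_pos_of_pos_of_nonneg (hA i) ?_) (by linarith)
    exact Finset.sum_nonneg fun j _ => mul_nonneg (hA' _) (pow_nonneg (hy0 j) d)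
  refine ⟨lam, fun i => ?_, by simp [hlam], ?_, fun i => ?_⟩
  · by_cases hi : i = 0
    · simp [hlam, hi]
    · simpa [hlam, hi] using pow_pos (hypos i hi) d
  · obtain ⟨i, hi⟩ := exists_ne (0 : G)
    refine ⟨i, ?_⟩
    have h1 : y i < 1 :=
      ((le_abs_self _).trans (abs_le_lpN (by positivity) y i)).trans_lt (hyε.trans_lt hεlt)
    simp only [hlam, hi, if_false]
    exact (pow_lt_one₀ (hy0 i) h1 (by omega)).ne
  · rw [hsplit, hden]
    by_cases hi : i = 0
    · subst hi
      have : (∑ j, A (0 - j) * y j ^ d) = ∑ j, A j * y j ^ d := by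
        simp only [zero_sub, hAeven]
      rw [this, div_self (by linarith)]
      simp [hlam]
    · rw [← hyi i hi]
      simp [hlam, hi]

end FixedPoint

/-! ### The fuzzy operator for large periods -/

section Fuzzy

lemma Qfuzzy_neg (q : ℕ) {Q : ℤ → ℝ} (hQeven : ∀ j, Q (-j) = Q j) (i : ZMod q) :
    Qfuzzy q Q (-i) = Qfuzzy q Q i := by
  unfold Qfuzzy
  let e : {j : ℤ // (j : ZMod q) = -i} ≃ {j : ℤ // (j : ZMod q) = i} :=
    (Equiv.neg ℤ).subtypeEquiv fun j => by simp [neg_eq_iff_eq_neg]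
  rw [← e.tsum_eq]
  exact tsum_congr fun j => (hQeven j.1).symm

lemma le_Qfuzzy (q : ℕ) {Q : ℤ → ℝ} (hQpos : ∀ j, 0 < Q j) (hQsum : Summable Q) (i : ZMod q) :
    Q i.valMinAbs ≤ Qfuzzy q Q i :=
  (hQsum.subtype {j : ℤ | (j : ZMod q) = i}).le_tsum
    (⟨i.valMinAbs, i.coe_valMinAbs⟩ : {j : ℤ // (j : ZMod q) = i}) fun j _ => (hQpos j.1).le

lemma sum_Qfuzzy (q : ℕ) [NeZero q] {Q : ℤ → ℝ} (hQsum : Summable Q) :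
    ∑ i : ZMod q, Qfuzzy q Q i = ∑' j, Q j := by
  have h := hQsum.hasSum.tsum_fiberwise (fun j : ℤ => (j : ZMod q))
  exact (tsum_fintype _).symm.trans h.tsum_eq

/-- The mass that `Qfuzzy` collects from outside the window `(-q/2, q/2]` of minimal
representatives becomes negligible as `q` grows. -/
lemma exists_sum_tail_le {Q : ℤ → ℝ} (hQpos : ∀ j, 0 < Q j) (hQsum : Summable Q)
    {η : ℝ} (hη : 0 < η) :
    ∃ q₁ : ℕ, ∀ q : ℕ, q₁ ≤ q → ∀ [NeZero q],
      ∑ i : ZMod q, (Qfuzzy q Q i - Q i.valMinAbs) ≤ η := by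
  obtain ⟨s, hs⟩ := ((hQsum.hasSum.eventually (lt_mem_nhds
    (show (∑' j, Q j) - η < ∑' j, Q j by linarith)))).exists
  refine ⟨2 * s.sup Int.natAbs + 1, fun q hq _ => ?_⟩
  rw [Finset.sum_sub_distrib, sum_Qfuzzy q hQsum]
  have hsub : s ⊆ (Finset.univ : Finset (ZMod q)).image ZMod.valMinAbs := by
    intro j hj
    have h1 : j.natAbs ≤ s.sup Int.natAbs := Finset.le_sup (f := Int.natAbs) hj
    refine Finset.mem_image.2 ⟨(j : ZMod q), Finset.mem_univ _, ?_⟩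
    rw [ZMod.valMinAbs_spec]
    refine ⟨rfl, ?_⟩
    constructor <;> omega
  have h2 : ∑ j ∈ s, Q j ≤ ∑ i : ZMod q, Q i.valMinAbs := by
    rw [← Finset.sum_image (f := Q) (g := fun i : ZMod q => i.valMinAbs)
      fun a _ b _ h => ZMod.injective_valMinAbs h]
    exact Finset.sum_le_sum_of_subset_of_nonneg hsub fun j _ _ => (hQpos j).le
  linarith

lemma summable_abs_rpow {P : ℤ → ℝ} (hP : Summable P) {p : ℝ} (hp : 1 ≤ p) :
    Summable fun j => |P j| ^ p := by
  refine hP.abs.of_norm_bounded_eventually ?_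
  have h0 : Tendsto (fun j => |P j|) cofinite (𝓝 0) := hP.abs.tendsto_cofinite_zero
  filter_upwards [h0.eventually (ge_mem_nhds (zero_lt_one))] with j hj
  rw [Real.norm_of_nonneg (by positivity)]
  exact Real.rpow_le_self_of_le_one (abs_nonneg _) hj hp

/-- A function on `ZMod q` dominated by a summable `P` on representatives plus a remainder has
`p`-norm at most `normZ p P` plus the mass of the remainder. -/
lemma lpN_le_normZ_add {q : ℕ} [NeZero q] {P : ℤ → ℝ} (hP : Summable P) {p : ℝ} (hp : 1 ≤ p)
    {B R : ZMod q → ℝ} {η : ℝ} (hB : ∀ i, 0 ≤ B i) (hR : ∀ i, 0 ≤ R i)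
    (h : ∀ i, B i ≤ P i.valMinAbs + R i) (hη : ∑ i, R i ≤ η) :
    lpN p B ≤ normZ p P + η := by
  have h1 : lpN p (fun i : ZMod q => P i.valMinAbs) ≤ normZ p P := by
    unfold lpN normZ
    refine Real.rpow_le_rpow (sum_abs_rpow_nonneg _ _) ?_ (by positivity)
    rw [← Finset.sum_image (f := fun j : ℤ => |P j| ^ p) (g := fun i : ZMod q => i.valMinAbs)
      fun a _ b _ h => ZMod.injective_valMinAbs h]
    exact (summable_abs_rpow hP hp).sum_le_tsum _ fun _ _ => by positivity
  have h2 : lpN p R ≤ η := (lpN_le_sum hp R).trans (by simpa only [abs_of_nonneg (hR _)] using hη)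
  calc lpN p B ≤ lpN p (fun i => P i.valMinAbs + R i) :=
        lpN_mono (by linarith) fun i => by
          rw [abs_of_nonneg (hB i)]; exact (h i).trans (le_abs_self _)
    _ ≤ _ := lpN_add_le hp _ _
    _ ≤ _ := add_le_add h1 h2

lemma normZ0_eq {p : ℝ} (hp : 0 < p) (Q : ℤ → ℝ) :
    normZ0 p Q = normZ p (fun j => if j = 0 then 0 else Q j) := by
  unfold normZ0 normZ
  congr 1
  rw [show (∑' j : {j : ℤ // j ≠ 0}, |Q j.1| ^ p) = _ from
    tsum_subtype {j : ℤ | j ≠ 0} (fun j => |Q j| ^ p)]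
  refine tsum_congr fun j => ?_
  by_cases hj : j = 0
  · simp [hj, Real.zero_rpow hp.ne']
  · simp [hj]

end Fuzzy

/-- Theorem 3.1, part 2: existence of non-constant `q`-periodic boundary
law solutions for all sufficiently large periods `q`, provided
`(‖Q‖_{(d+1)/2,ℤ}, ‖Q‖_{d+1,ℤ∖{0}})` lies in the interior of the good set. -/
theorem stmt14 (d : ℕ) (hd : 2 ≤ d)
    (Q : ℤ → ℝ) (hQpos : ∀ j, 0 < Q j) (hQeven : ∀ j, Q (-j) = Q j)
    (hQ0 : Q 0 = 1) (hQsum : Summable Q)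
    (hcond : Summable fun i : ℕ =>
      (∑' j : ℕ, Qtilde Q (((i : ℤ) + 1) * ((j : ℤ) + 1))) ^ (((d : ℝ) + 1) / 2))
    (hgood : (normZ (((d : ℝ) + 1) / 2) Q, normZ0 ((d : ℝ) + 1) Q)
      ∈ interior (goodSet d)) :
    ∃ q₀ : ℕ, 2 ≤ q₀ ∧ ∀ q : ℕ, q₀ ≤ q → ∃ lam : ZMod q → ℝ,
      (∀ i, 0 < lam i) ∧ lam 0 = 1 ∧ (∃ i : ZMod q, lam i ≠ 1) ∧
      ∀ i : ZMod q, lam i =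
        ((∑' j : ZMod q, Qfuzzy q Q (i - j) * lam j) /
          (∑' j : ZMod q, Qfuzzy q Q j * lam j)) ^ d := by

  have hd0 : (2 : ℝ) ≤ d := by exact_mod_cast hd
  set γ := normZ (((d : ℝ) + 1) / 2) Q with hγ
  set δ := normZ0 ((d : ℝ) + 1) Q with hδ
  -- Interiority leaves room to enlarge both coordinates by the same `ρ / 2`.
  obtain ⟨ρ, hρ, hball⟩ := Metric.mem_nhds_iff.1 (mem_interior_iff_mem_nhds.1 hgood)
  have hmem : (γ + ρ / 2, δ + ρ / 2) ∈ goodSet d := by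
    apply hball
    rw [Metric.mem_ball, Prod.dist_eq]
    simp only [Real.dist_eq, add_sub_cancel_left, abs_of_pos (half_pos hρ), max_self]
    linarith
  obtain ⟨hγ1, hδ0, ε, hε, hε1, hε2⟩ := hmem
  obtain ⟨q₁, hq₁⟩ := exists_sum_tail_le hQpos hQsum (half_pos hρ)
  refine ⟨max 2 q₁, le_max_left _ _, fun q hq => ?_⟩
  have hq2 : 2 ≤ q := (le_max_left _ _).trans hq
  have : NeZero q := ⟨by omega⟩
  have : Fact (1 < q) := ⟨by omega⟩
  have htail := hq₁ q ((le_max_right _ _).trans hq)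
  have hle := le_Qfuzzy q hQpos hQsum
  have hpos : ∀ i, 0 < Qfuzzy q Q i := fun i => (hQpos _).trans_le (hle i)
  have hQ00 : 1 ≤ Qfuzzy q Q 0 := by simpa [hQ0] using hle 0
  have hG : lpN (((d : ℝ) + 1) / 2) (Qfuzzy q Q) ≤ γ + ρ / 2 :=
    lpN_le_normZ_add hQsum (by linarith) (fun i => (hpos i).le)
      (fun i => sub_nonneg.2 (hle i)) (fun i => by linarith) htail
  have hD : lpN ((d : ℝ) + 1) (fun i => if i = 0 then 0 else Qfuzzy q Q i) ≤ δ + ρ / 2 := by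
    rw [hδ, normZ0_eq (by linarith)]
    have hP : Summable fun j : ℤ => if j = 0 then 0 else Q j := by
      refine hQsum.of_nonneg_of_le (fun j => ?_) fun j => ?_
      · split_ifs
        exacts [le_rfl, (hQpos j).le]
      · split_ifs
        exacts [(hQpos j).le, le_rfl]
    refine lpN_le_normZ_add hP (by linarith) (fun i => ?_)
      (fun i => sub_nonneg.2 (hle i)) (fun i => ?_) htail
    · split_ifs
      exacts [le_rfl, (hpos i).le]
    · by_cases hi : i = 0
      · subst hi
        simpa using hle 0
      · simp [hi]
  obtain ⟨lam, h1, h2, h3, h4⟩ := exists_boundaryLaw hd hpos hQ00 (Qfuzzy_neg q hQeven)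
    hγ1 hδ0 hG hD hε hε1 hε2
  refine ⟨lam, h1, h2, h3, fun i => ?_⟩
  rw [tsum_fintype, tsum_fintype]
  exact h4 i
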